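/- Let I be a position on the board 𝔖 and A ∈ 𝔖 a point such that some position reachable from I by legal moves contains A (i.e. the height of A with respect to I is finite). Then for every nonnegative resource count π on 𝔖, one has ⟨χ_I, π⟩ = Σ_{B∈I} π(B) ≥ π(A). -/

import Mathlib

def dirs : Finset (ℤ × ℤ) := {(1,0), (-1,0), (0,1), (0,-1)}

def chi (X : ℤ × ℤ) : (ℤ × ℤ) → ℤ := fun Y => if Y = X then 1 else 0

def chiSet (I : Finset (ℤ × ℤ)) : (ℤ × ℤ) → ℤ := fun P => if P ∈ I then 1 else 0

def IsMove (S : Finset (ℤ × ℤ)) (g : (ℤ × ℤ) → ℤ) : Prop :=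
  ∃ P d : ℤ × ℤ, d ∈ dirs ∧ P ∈ S ∧ P + d ∈ S ∧ P + d + d ∈ S ∧
    g = chi P + chi (P + d) - chi (P + d + d)

def IsMiddle (S : Finset (ℤ × ℤ)) (Q : ℤ × ℤ) : Prop :=
  ∃ P d : ℤ × ℤ, d ∈ dirs ∧ P ∈ S ∧ P + d ∈ S ∧ P + d + d ∈ S ∧ Q = P + d

def Neighbor (S : Finset (ℤ × ℤ)) (A B : ℤ × ℤ) : Prop :=
  ∃ d ∈ dirs, A ∈ S ∧ A + d ∈ S ∧ A + d + d ∈ S ∧ B = A + d + d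

def NoIsolatedPoint (S : Finset (ℤ × ℤ)) : Prop :=
  ∀ P ∈ S, ∃ Q, Relation.EqvGen (Neighbor S) P Q ∧ IsMiddle S Q

def IsResourceCount (S : Finset (ℤ × ℤ)) (π : (ℤ × ℤ) → ℝ) : Prop :=
  ∀ P d : ℤ × ℤ, d ∈ dirs → P ∈ S → P + d ∈ S → P + d + d ∈ S →
    π (P + d + d) ≤ π P + π (P + d)

def LegalMove (S I : Finset (ℤ × ℤ)) (g : (ℤ × ℤ) → ℤ) (I' : Finset (ℤ × ℤ)) : Prop :=
  ∃ P d : ℤ × ℤ, d ∈ dirs ∧ P ∈ S ∧ P + d ∈ S ∧ P + d + d ∈ S ∧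
    g = chi P + chi (P + d) - chi (P + d + d) ∧
    P ∈ I ∧ P + d ∈ I ∧ P + d + d ∉ I ∧
    I' = (I \ {P, P + d}) ∪ {P + d + d}

def Transforms (S : Finset (ℤ × ℤ)) :
    List ((ℤ × ℤ) → ℤ) → Finset (ℤ × ℤ) → Finset (ℤ × ℤ) → Prop
  | [], I, J => I = J
  | g :: L, I, J => ∃ I', LegalMove S I g I' ∧ Transforms S L I' J

def boxProd (g₁ g₂ : (ℤ × ℤ) → ℤ) : Sym2 (ℤ × ℤ) → ℤ :=
  Sym2.lift ⟨fun A B => if A = B then g₁ A * g₂ A else g₁ A * g₂ B + g₁ B * g₂ A, by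
    intro A B
    by_cases h : A = B
    · subst h; rfl
    · simp only [if_neg h, if_neg (Ne.symm h)]; ring⟩

def moveAbs (g : (ℤ × ℤ) → ℤ) : (ℤ × ℤ) → ℤ := fun A => |g A|

def IsQMove (S : Finset (ℤ × ℤ)) (c : Sym2 (ℤ × ℤ) → ℤ) : Prop :=
  (∃ A g, A ∈ S ∧ IsMove S g ∧ g A = 0 ∧ c = boxProd (fun B => 2 * chi A B) g) ∨
  (∃ g, IsMove S g ∧ c = boxProd (moveAbs g) g)

def StepList (S : Finset (ℤ × ℤ)) :
    List (Finset (ℤ × ℤ)) → List ((ℤ × ℤ) → ℤ) → Prop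
  | [_], [] => True
  | I :: I' :: Ps, g :: L => LegalMove S I g I' ∧ StepList S (I' :: Ps) L
  | _, _ => False

def pOfSeq (A : ℤ × ℤ) : List (Finset (ℤ × ℤ)) → List ((ℤ × ℤ) → ℤ) → ℕ
  | I :: Ps, g :: L => (if g A ≠ 0 then 1 else if A ∈ I then 1 else 0) + pOfSeq A Ps L
  | _, _ => 0

def bothCount (A A' : ℤ × ℤ) : List ((ℤ × ℤ) → ℤ) → ℕ
  | [] => 0
  | g :: L => (if g A ≠ 0 ∧ g A' ≠ 0 then 1 else 0) + bothCount A A' L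

noncomputable def pagoda (P : ℤ × ℤ) : ℝ := ((Real.sqrt 5 - 1) / 2) ^ (P.1.natAbs + P.2.natAbs)

theorem LegalMove.subset {S I I' : Finset (ℤ × ℤ)} {g : (ℤ × ℤ) → ℤ}
    (h : LegalMove S I g I') (hI : I ⊆ S) : I' ⊆ S := by
  obtain ⟨P, d, -, -, -, hR, -, -, -, -, rfl⟩ := h
  exact Finset.union_subset (Finset.sdiff_subset.trans hI) (Finset.singleton_subset_iff.2 hR)

theorem LegalMove.sum_le {S I I' : Finset (ℤ × ℤ)} {g : (ℤ × ℤ) → ℤ} {π : (ℤ × ℤ) → ℝ}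
    (h : LegalMove S I g I') (hπ : IsResourceCount S π) :
    ∑ B ∈ I', π B ≤ ∑ B ∈ I, π B := by
  obtain ⟨P, d, hd, hPS, hQS, hRS, -, hP, hQ, hR, rfl⟩ := h
  have hPQ : P ≠ P + d := by
    intro hPd
    have hd0 : d = 0 := by simpa using hPd
    subst hd0
    exact absurd hd (by decide)
  have hsub : ({P, P + d} : Finset (ℤ × ℤ)) ⊆ I :=
    Finset.insert_subset hP (Finset.singleton_subset_iff.2 hQ)
  have hdisj : Disjoint (I \ {P, P + d}) {P + d + d} :=
    Finset.disjoint_singleton_right.2 fun hmem => hR (Finset.sdiff_subset hmem)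
  rw [Finset.sum_union hdisj, Finset.sum_singleton, ← Finset.sum_sdiff hsub,
    Finset.sum_pair hPQ]
  gcongr
  exact hπ P d hd hPS hQS hRS

theorem Transforms.subset_and_sum_le {S : Finset (ℤ × ℤ)} {π : (ℤ × ℤ) → ℝ}
    (hπ : IsResourceCount S π) {L : List ((ℤ × ℤ) → ℤ)} {I J : Finset (ℤ × ℤ)}
    (h : Transforms S L I J) (hI : I ⊆ S) :
    J ⊆ S ∧ ∑ B ∈ J, π B ≤ ∑ B ∈ I, π B := by
  induction L generalizing I with
  | nil =>
    cases (show I = J from h)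
    exact ⟨hI, le_rfl⟩
  | cons g L ih =>
    obtain ⟨I', hmove, hrest⟩ := h
    obtain ⟨hJ, hle⟩ := ih hrest (hmove.subset hI)
    exact ⟨hJ, hle.trans (hmove.sum_le hπ)⟩

/-- If some position reachable from `I` contains `A` (finite height), then for
every nonnegative resource count `π` one has `⟨χ_I,π⟩ ≥ π(A)`. -/
theorem finite_height_resource_bound (S I : Finset (ℤ × ℤ)) (hI : I ⊆ S)
    (A : ℤ × ℤ) (hA : A ∈ S)
    (hreach : ∃ (L : List ((ℤ × ℤ) → ℤ)) (J : Finset (ℤ × ℤ)), Transforms S L I J ∧ A ∈ J)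
    (π : (ℤ × ℤ) → ℝ) (hπ : IsResourceCount S π) (hnonneg : ∀ B ∈ S, 0 ≤ π B) :
    π A ≤ ∑ B ∈ I, π B := by
  obtain ⟨L, J, hLJ, hAJ⟩ := hreach
  obtain ⟨hJ, hle⟩ := hLJ.subset_and_sum_le hπ hI
  exact (Finset.single_le_sum (fun B hB => hnonneg B (hJ hB)) hAJ).trans hle
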